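/- Let ε,b > 0 and let c:(−ε,b) → ℝ^{n+2} be smooth with ⟨c(t),c(t)⟩ = 0, c(t) ≠ 0 and ⟨c′(t),c′(t)⟩ > 0 for all t. Let λ ∈ ℝ, fix p ∈ (0,b), and let T:(0,b) → End(ℝ^{n+2}) be differentiable with T(p) = id and T′(t) = −(λ/t)·(T(t)∘(c(t)∧c′(t))) for all t ∈ (0,b). Then the curve t ↦ T(t)(c(t)) converges projectively as t → 0⁺: there exist nonzero reals r(t) and a nonzero vector x ∈ ℝ^{n+2} such that r(t)·T(t)(c(t)) → x as t → 0⁺. -/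

import Mathlib

open scoped BigOperators Topology
open Filter Set MeasureTheory

noncomputable section

abbrev E (n : ℕ) := EuclideanSpace ℝ (Fin (n + 2))

/-- Minkowski inner product of signature (n+1,1). -/
def mink {n : ℕ} (x y : E n) : ℝ :=
  ∑ i, (if i = Fin.last (n + 1) then (-1 : ℝ) else 1) * x i * y i

variable {n : ℕ}

lemma mink_comm (x y : E n) : mink x y = mink y x :=
  Finset.sum_congr rfl fun i _ => by ring

lemma mink_add_right (v x y : E n) : mink v (x + y) = mink v x + mink v y := by
  simp [mink, mul_add, Finset.sum_add_distrib]

lemma mink_smul_right (v : E n) (c : ℝ) (x : E n) : mink v (c • x) = c * mink v x := by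
  unfold mink
  rw [Finset.mul_sum]
  refine Finset.sum_congr rfl fun i _ => ?_
  simp only [PiLp.smul_apply, smul_eq_mul]
  ring

lemma mink_add_left (x y v : E n) : mink (x + y) v = mink x v + mink y v := by
  rw [mink_comm, mink_add_right, mink_comm v x, mink_comm v y]

lemma mink_smul_left (c : ℝ) (x v : E n) : mink (c • x) v = c * mink x v := by
  rw [mink_comm, mink_smul_right, mink_comm v x]

/-- `v ∧ w` as an endomorphism: `x ↦ ⟨v,x⟩ w − ⟨w,x⟩ v`. -/
def wedge {n : ℕ} (v w : E n) : E n →L[ℝ] E n :=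
  LinearMap.toContinuousLinearMap
    { toFun := fun x => mink v x • w - mink w x • v
      map_add' := by
        intro x y
        simp only [mink_add_right, add_smul]
        abel
      map_smul' := by
        intro c x
        simp only [mink_smul_right, RingHom.id_apply, mul_smul, smul_sub] }

/-- rank one endomorphism `vw* : x ↦ ⟨x,w⟩ v`. -/
def rankOne {n : ℕ} (v w : E n) : E n →L[ℝ] E n :=
  LinearMap.toContinuousLinearMap
    { toFun := fun x => mink x w • v
      map_add' := by
        intro x y
        simp only [mink_add_left, add_smul]
      map_smul' := by
        intro c x
        simp only [mink_smul_left, RingHom.id_apply, mul_smul] }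

/-!
The curve `A = c ∧ c'` of endomorphisms takes nilpotent values: since `c` is null and hence
orthogonal to `c'`, `A ^ 3 = 0`. Thus `exp (l • A)` is a polynomial in `l`, and the gauged map
`F = T * exp (lam * log t • A)` satisfies `F' = F * K`, where the singular terms `(lam / t) * T * A`
have cancelled and `K` grows at most like a power of `log t`. So `K` is integrable at `0`, and both
`F` and `F⁻¹` (which solves a linear equation of the same kind) converge; the limit `L` of `F` is
therefore invertible. Finally `A c = 0`, so the gauge fixes `c` and `T c = F c → L (c 0) ≠ 0`: the
light-cone lift `T c` converges without being rescaled.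
-/

open Asymptotics

section Gronwall

variable {V : Type*} [NormedAddCommGroup V] [NormedSpace ℝ V] {f f' : ℝ → V} {C x y : ℝ}

lemma norm_le_norm_mul_exp_of_norm_deriv_le_of_le (hxy : x ≤ y)
    (hf : ∀ t ∈ Icc x y, HasDerivAt f (f' t) t) (hbound : ∀ t ∈ Icc x y, ‖f' t‖ ≤ C * ‖f t‖) :
    ‖f y‖ ≤ ‖f x‖ * Real.exp (C * (y - x)) := by
  have h := norm_le_gronwallBound_of_norm_deriv_right_le (δ := ‖f x‖) (K := C) (ε := 0)
    (fun t ht => (hf t ht).continuousAt.continuousWithinAt)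
    (fun t ht => (hf t (Ico_subset_Icc_self ht)).hasDerivWithinAt) le_rfl
    (fun t ht => by simpa only [add_zero] using hbound t (Ico_subset_Icc_self ht))
    y (right_mem_Icc.2 hxy)
  rwa [gronwallBound_ε0] at h

lemma norm_le_norm_mul_exp_of_norm_deriv_le
    (hf : ∀ t ∈ uIcc x y, HasDerivAt f (f' t) t)
    (hbound : ∀ t ∈ uIcc x y, ‖f' t‖ ≤ C * ‖f t‖) :
    ‖f y‖ ≤ ‖f x‖ * Real.exp (C * |y - x|) := by
  rcases le_total x y with hxy | hyx
  · rw [uIcc_of_le hxy] at hf hbound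
    rw [abs_of_nonneg (sub_nonneg.2 hxy)]
    exact norm_le_norm_mul_exp_of_norm_deriv_le_of_le hxy hf hbound
  · rw [uIcc_of_ge hyx] at hf hbound
    have hmem : ∀ t ∈ Icc (-x) (-y), -t ∈ Icc y x := fun t ht =>
      ⟨le_neg.2 ht.2, neg_le.2 ht.1⟩
    have h := norm_le_norm_mul_exp_of_norm_deriv_le_of_le (f := fun t => f (-t))
      (f' := fun t => -f' (-t)) (C := C) (neg_le_neg hyx)
      (fun t ht => by
        simpa using! HasDerivAt.scomp t (hf (-t) (hmem t ht)) (hasDerivAt_neg t))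
      (fun t ht => by simpa only [norm_neg] using hbound (-t) (hmem t ht))
    rw [abs_of_nonpos (sub_nonpos.2 hyx), neg_sub]
    simpa only [neg_neg, neg_sub_neg] using h

lemma norm_sub_le_of_norm_deriv_le_mul_norm (hC : 0 ≤ C)
    (hf : ∀ t ∈ uIcc x y, HasDerivAt f (f' t) t)
    (hbound : ∀ t ∈ uIcc x y, ‖f' t‖ ≤ C * ‖f t‖) :
    ‖f y - f x‖ ≤ C * (‖f x‖ * Real.exp (C * |y - x|)) * |y - x| := by
  refine (convex_uIcc x y).norm_image_sub_le_of_norm_hasDerivWithin_le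
    (fun t ht => (hf t ht).hasDerivWithinAt) (fun t ht => (hbound t ht).trans ?_)
    left_mem_uIcc right_mem_uIcc
  have hsub : uIcc x t ⊆ uIcc x y := uIcc_subset_uIcc left_mem_uIcc ht
  have hgrowth := norm_le_norm_mul_exp_of_norm_deriv_le
    (fun s hs => hf s (hsub hs)) (fun s hs => hbound s (hsub hs))
  have hdist : |t - x| ≤ |y - x| := abs_sub_left_of_mem_uIcc ht
  gcongr
  exact hgrowth.trans (by gcongr)

lemma exists_tendsto_nhdsGT_of_deriv_isBigO_self [CompleteSpace V] {a : ℝ}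
    (hf : ∀ᶠ t in 𝓝[>] a, HasDerivAt f (f' t) t) (hO : f' =O[𝓝[>] a] f) :
    ∃ L, Tendsto f (𝓝[>] a) (𝓝 L) := by
  obtain ⟨C, hC, hbound⟩ := hO.exists_nonneg
  obtain ⟨d, had : a < d, hd⟩ := mem_nhdsGT_iff_exists_Ioo_subset.1 (hf.and hbound.bound)
  obtain ⟨m, hm⟩ : (Ioo a d).Nonempty := nonempty_Ioo.2 had
  have hsub : ∀ {x y}, x ∈ Ioo a d → y ∈ Ioo a d → uIcc x y ⊆ Ioo a d := fun hx hy =>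
    ordConnected_Ioo.uIcc_subset hx hy
  have hdist : ∀ x ∈ Ioo a d, |x - m| ≤ d - a := fun x hx =>
    abs_le.2 ⟨by linarith [hx.1, hm.2], by linarith [hx.2, hm.1]⟩
  have hbdd : ∀ x ∈ Ioo a d, ‖f x‖ ≤ ‖f m‖ * Real.exp (C * (d - a)) := fun x hx =>
    (norm_le_norm_mul_exp_of_norm_deriv_le (fun t ht => (hd (hsub hm hx ht)).1)
      (fun t ht => (hd (hsub hm hx ht)).2)).trans (by gcongr; exact hdist x hx)
  have hlip : LipschitzOnWith (C * (‖f m‖ * Real.exp (C * (d - a)))).toNNReal f (Ioo a d) :=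
    (convex_Ioo a d).lipschitzOnWith_of_nnnorm_hasDerivWithin_le
      (fun x hx => (hd hx).1.hasDerivWithinAt)
      (fun x hx => NNReal.coe_le_coe.1 (by
        rw [coe_nnnorm, Real.coe_toNNReal _ (by positivity)]
        exact (hd hx).2.trans (by gcongr; exact hbdd x hx)))
  exact cauchy_map_iff_exists_tendsto.1 <| (cauchy_nhds.mono nhdsWithin_le_nhds).map_of_le
    hlip.uniformContinuousOn (le_principal_iff.2 (Ioo_mem_nhdsGT had))

lemma tendsto_rpow_nhdsGT_zero {e : ℝ} (he : 0 < e) :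
    Tendsto (fun t : ℝ => t ^ e) (𝓝[>] 0) (𝓝[>] 0) := by
  have hcont := (Real.continuousAt_rpow_const 0 e (Or.inr he.le)).tendsto
  rw [Real.zero_rpow he.ne'] at hcont
  exact tendsto_nhdsWithin_iff.2 ⟨hcont.mono_left nhdsWithin_le_nhds,
    eventually_mem_nhdsWithin.mono fun t ht => Real.rpow_pos_of_pos ht e⟩

-- The substitution `t = s ^ (1 / (1 - r))` absorbs the integrable weight `t ^ (-r)`.
lemma exists_tendsto_nhdsGT_zero_of_deriv_isBigO_rpow_mul [CompleteSpace V] {r : ℝ} (hr : r < 1)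
    (hf : ∀ᶠ t in 𝓝[>] 0, HasDerivAt f (f' t) t)
    (hO : f' =O[𝓝[>] 0] fun t => t ^ (-r) * ‖f t‖) :
    ∃ L, Tendsto f (𝓝[>] 0) (𝓝 L) := by
  have hr' : 0 < 1 - r := sub_pos.2 hr
  set q : ℝ := (1 - r)⁻¹ with hq
  have hpow := tendsto_rpow_nhdsGT_zero (inv_pos.2 hr')
  have hderiv : ∀ᶠ s in 𝓝[>] 0,
      HasDerivAt (fun s => f (s ^ q)) ((q * s ^ (q - 1)) • f' (s ^ q)) s := by
    filter_upwards [hpow.eventually hf, self_mem_nhdsWithin] with s hs hs0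
    exact HasDerivAt.scomp s hs (Real.hasDerivAt_rpow_const (Or.inl (ne_of_gt hs0)))
  have hweight : ∀ s ∈ Ioi (0 : ℝ), s ^ (q - 1) * (s ^ q) ^ (-r) = 1 := fun s hs => by
    rw [← Real.rpow_mul (le_of_lt hs), ← Real.rpow_add hs,
      show q - 1 + q * -r = 0 by rw [hq]; field_simp; ring, Real.rpow_zero]
  have hbound : (fun s => (q * s ^ (q - 1)) • f' (s ^ q)) =O[𝓝[>] 0] fun s => f (s ^ q) := by
    refine ((((isBigO_refl _ _).const_mul_left q).smul
      (hO.comp_tendsto hpow)).trans_eventuallyEq ?_).of_norm_right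
    filter_upwards [self_mem_nhdsWithin] with s hs
    rw [Function.comp_apply, smul_eq_mul, ← mul_assoc, hweight s hs, one_mul]
  obtain ⟨L, hL⟩ := exists_tendsto_nhdsGT_of_deriv_isBigO_self hderiv hbound
  refine ⟨L, (hL.comp (tendsto_rpow_nhdsGT_zero hr')).congr' ?_⟩
  filter_upwards [self_mem_nhdsWithin] with t ht
  rw [Function.comp_apply, Real.rpow_rpow_inv (le_of_lt ht) hr'.ne']

end Gronwall

section LinearODE

variable {𝔸 : Type*} [NormedRing 𝔸] [CompleteSpace 𝔸]

lemma isUnit_of_norm_inv_mul_sub_lt_one (u : 𝔸ˣ) {a : 𝔸} (h : ‖↑u⁻¹ * a - 1‖ < 1) :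
    IsUnit a := by
  have hunit : IsUnit (1 - (1 - ↑u⁻¹ * a)) :=
    isUnit_one_sub_of_norm_lt_one (by rwa [norm_sub_rev])
  rwa [sub_sub_cancel, Units.isUnit_units_mul] at hunit

variable [NormedAlgebra ℝ 𝔸] {F K : ℝ → 𝔸}

lemma isUnit_of_hasDerivAt_mul_of_isUnit {S : Set ℝ} (hS : IsOpen S) (hconn : IsPreconnected S)
    (hF : ∀ t ∈ S, HasDerivAt F (F t * K t) t) (hK : ContinuousOn K S) {p : ℝ} (hp : p ∈ S)
    (hFp : IsUnit (F p)) {t : ℝ} (ht : t ∈ S) : IsUnit (F t) := by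
  have hFcont : ContinuousOn F S := fun t ht => (hF t ht).continuousAt.continuousWithinAt
  refine (hconn.subset_of_closure_inter_subset
    (hFcont.isOpen_inter_preimage hS Units.isOpen) ⟨p, hp, hp, hFp⟩ ?_ ht).2
  rintro t ⟨htcl, htS⟩
  refine ⟨htS, ?_⟩
  set C := ‖K t‖ + 1
  obtain ⟨δ, hδ, hball⟩ : ∃ δ > 0, Metric.ball t δ ⊆ {s | s ∈ S ∧ ‖K s‖ ≤ C} :=
    Metric.mem_nhds_iff.1 (inter_mem (hS.mem_nhds htS)
      ((hK.continuousAt (hS.mem_nhds htS)).norm.eventually_le_const (lt_add_one _)))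
  have hsmall : ∀ᶠ s in 𝓝 t,
      C * (‖(1 : 𝔸)‖ * Real.exp (C * |t - s|)) * |t - s| < 1 :=
    (Continuous.tendsto (by fun_prop) t).eventually_lt_const (by simp)
  obtain ⟨s, ⟨-, u, hu⟩, hsδ, hs⟩ := ((mem_closure_iff_frequently.1 htcl).and_eventually
    (Filter.Eventually.and (Metric.ball_mem_nhds t hδ) hsmall)).exists
  have hsub : uIcc s t ⊆ Metric.ball t δ :=
    (convex_ball t δ).ordConnected.uIcc_subset hsδ (Metric.mem_ball_self hδ)
  have hstep := norm_sub_le_of_norm_deriv_le_mul_norm (f := fun τ => ↑u⁻¹ * F τ) (C := C)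
    (by positivity) (fun τ hτ => (hF τ (hball (hsub hτ)).1).const_mul _)
    (fun τ hτ => by
      rw [← mul_assoc, mul_comm C]
      exact norm_mul_le_of_le le_rfl (hball (hsub hτ)).2)
  simp only [← hu, Units.inv_mul] at hstep
  exact isUnit_of_norm_inv_mul_sub_lt_one u (hstep.trans_lt hs)

lemma hasDerivAt_ringInverse_of_mul {k : 𝔸} {t : ℝ} (hF : HasDerivAt F (F t * k) t)
    (hunit : IsUnit (F t)) :
    HasDerivAt (fun s => Ring.inverse (F s)) (-(k * Ring.inverse (F t))) t := by
  obtain ⟨u, hu⟩ := hunit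
  have h := (hu ▸ hasFDerivAt_ringInverse (𝕜 := ℝ) u :
    HasFDerivAt Ring.inverse _ (F t)).comp_hasDerivAt t hF
  refine h.congr_deriv ?_
  simp [← hu]

lemma exists_isUnit_tendsto_nhdsGT_zero_of_hasDerivAt_mul {r : ℝ} (hr : r < 1)
    (hF : ∀ᶠ t in 𝓝[>] 0, HasDerivAt F (F t * K t) t) (hunit : ∀ᶠ t in 𝓝[>] 0, IsUnit (F t))
    (hK : K =O[𝓝[>] 0] fun t => t ^ (-r)) :
    ∃ L, IsUnit L ∧ Tendsto F (𝓝[>] 0) (𝓝 L) := by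
  obtain ⟨L, hL⟩ : ∃ L, Tendsto F (𝓝[>] 0) (𝓝 L) :=
    exists_tendsto_nhdsGT_zero_of_deriv_isBigO_rpow_mul hr hF <| by
      simpa only [mul_comm] using (isBigO_refl F _).norm_right.mul hK
  obtain ⟨L', hL'⟩ : ∃ L', Tendsto (fun t => Ring.inverse (F t)) (𝓝[>] 0) (𝓝 L') :=
    exists_tendsto_nhdsGT_zero_of_deriv_isBigO_rpow_mul hr
      ((hF.and hunit).mono fun t ht => hasDerivAt_ringInverse_of_mul ht.1 ht.2)
      (hK.mul (isBigO_refl _ _).norm_right).neg_left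
  have hLL' : L * L' = 1 := tendsto_nhds_unique_of_eventuallyEq (hL.mul hL') tendsto_const_nhds
    (hunit.mono fun t ht => Ring.mul_inverse_cancel _ ht)
  have hL'L : L' * L = 1 := tendsto_nhds_unique_of_eventuallyEq (hL'.mul hL) tendsto_const_nhds
    (hunit.mono fun t ht => Ring.inverse_mul_cancel _ ht)
  exact ⟨L, ⟨⟨L, L', hLL', hL'L⟩, rfl⟩, hL⟩

end LinearODE

section NilpotentExp

variable {𝔸 : Type*} [NormedRing 𝔸] [NormedAlgebra ℝ 𝔸] {N : ℕ}

lemma exp_smul_eq_sum_of_pow_eq_zero {a : 𝔸} (ha : a ^ N = 0) (l : ℝ) :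
    NormedSpace.exp (l • a) = ∑ k ∈ Finset.range N, (l ^ k / k.factorial) • a ^ k := by
  rw [NormedSpace.exp_eq_tsum ℝ]
  refine (tsum_eq_sum fun k hk => ?_).trans (Finset.sum_congr rfl fun k _ => ?_)
  · rw [smul_pow, pow_eq_zero_of_le (not_lt.1 (Finset.mem_range.not.1 hk)) ha, smul_zero, smul_zero]
  · rw [smul_pow, smul_smul, inv_mul_eq_div]

lemma sum_deriv_coeff_smul_pow_eq_smul_mul_exp {a : 𝔸} (ha : a ^ N = 0) (l l' : ℝ) :
    ∑ k ∈ Finset.range N, (k * l ^ (k - 1) * l' / k.factorial) • a ^ k =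
      l' • (a * NormedSpace.exp (l • a)) := by
  calc ∑ k ∈ Finset.range N, (k * l ^ (k - 1) * l' / k.factorial) • a ^ k
      = ∑ k ∈ Finset.range (N + 1), (k * l ^ (k - 1) * l' / k.factorial) • a ^ k := by
        rw [Finset.sum_range_succ, ha, smul_zero, add_zero]
    _ = ∑ k ∈ Finset.range N, (l' * (l ^ k / k.factorial)) • (a * a ^ k) := by
        rw [Finset.sum_range_succ', Nat.cast_zero, zero_mul, zero_mul, zero_div, zero_smul,
          add_zero]
        refine Finset.sum_congr rfl fun k _ => ?_
        rw [← pow_succ', Nat.factorial_succ, Nat.add_sub_cancel]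
        push_cast
        congr 1
        field_simp
    _ = l' • (a * NormedSpace.exp (l • a)) := by
        simp only [exp_smul_eq_sum_of_pow_eq_zero ha, Finset.mul_sum, Finset.smul_sum,
          mul_smul_comm, smul_smul]

variable {A T : ℝ → 𝔸} {l : ℝ → ℝ} {l' t : ℝ}

lemma hasDerivAt_exp_smul_of_pow_eq_zero (hl : HasDerivAt l l' t)
    (hA : DifferentiableAt ℝ A t) (hnil : ∀ᶠ s in 𝓝 t, A s ^ N = 0) :
    HasDerivAt (fun s => NormedSpace.exp (l s • A s))
      (l' • (A t * NormedSpace.exp (l t • A t)) +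
        ∑ k ∈ Finset.range N, (l t ^ k / k.factorial) • deriv (fun s => A s ^ k) t) t := by
  have hsum : HasDerivAt (fun s => ∑ k ∈ Finset.range N, (l s ^ k / k.factorial) • A s ^ k)
      (∑ k ∈ Finset.range N, ((l t ^ k / k.factorial) • deriv (fun s => A s ^ k) t +
        (k * l t ^ (k - 1) * l' / k.factorial) • A t ^ k)) t :=
    HasDerivAt.fun_sum fun k _ => ((hl.fun_pow k).div_const _).fun_smul (hA.fun_pow k).hasDerivAt
  rw [Finset.sum_add_distrib, add_comm,
    sum_deriv_coeff_smul_pow_eq_smul_mul_exp hnil.self_of_nhds] at hsum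
  exact hsum.congr_of_eventuallyEq
    (hnil.mono fun s hs => exp_smul_eq_sum_of_pow_eq_zero hs (l s))

/-- The coefficient `K` of the equation `F' = F * K` satisfied by the gauged primitive
`F = T * exp (l • A)` when `T' = -l' • (T * A)` and `A` takes values in elements of nilpotency
order at most `N`; the argument `l` is the value at `t` of the gauge parameter. -/
def gaugedCoeff (N : ℕ) (A : ℝ → 𝔸) (l t : ℝ) : 𝔸 :=
  NormedSpace.exp (-(l • A t)) *
    ∑ k ∈ Finset.range N, (l ^ k / k.factorial) • deriv (fun s => A s ^ k) t

lemma hasDerivAt_mul_exp_smul_of_pow_eq_zero [CompleteSpace 𝔸] (hl : HasDerivAt l l' t)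
    (hA : DifferentiableAt ℝ A t) (hnil : ∀ᶠ s in 𝓝 t, A s ^ N = 0)
    (hT : HasDerivAt T (-l' • (T t * A t)) t) :
    HasDerivAt (fun s => T s * NormedSpace.exp (l s • A s))
      (T t * NormedSpace.exp (l t • A t) * gaugedCoeff N A (l t) t) t := by
  let _ := NormedAlgebra.restrictScalars ℚ ℝ 𝔸
  have hcancel : NormedSpace.exp (l t • A t) * NormedSpace.exp (-(l t • A t)) = 1 := by
    rw [← Ring.inverse_exp, Ring.mul_inverse_cancel _ (NormedSpace.isUnit_exp _)]
  refine (hT.mul (hasDerivAt_exp_smul_of_pow_eq_zero hl hA hnil)).congr_deriv ?_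
  rw [gaugedCoeff, mul_add, ← mul_assoc (T t * _), mul_assoc (T t), hcancel, mul_one,
    smul_mul_assoc, mul_smul_comm, ← mul_assoc, neg_smul, neg_add_cancel_left]

lemma isBigO_log_pow_rpow_nhdsGT_zero (k : ℕ) {r : ℝ} (hr : r < 0) :
    (fun t => Real.log t ^ k) =O[𝓝[>] 0] fun t => t ^ r := by
  have h := (isLittleO_abs_log_rpow_rpow_nhdsGT_zero k hr).isBigO
  simp only [Real.rpow_natCast, ← abs_pow] at h
  exact h.of_abs_left

lemma isBigO_sum_log_pow_smul_rpow_nhdsGT_zero {V : Type*} [NormedAddCommGroup V]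
    [NormedSpace ℝ V] {v : ℕ → ℝ → V}
    (hv : ∀ k, v k =O[𝓝[>] 0] fun _ => (1 : ℝ)) (μ : ℝ) {r : ℝ} (hr : r < 0) :
    (fun t => ∑ k ∈ Finset.range N, ((μ * Real.log t) ^ k / k.factorial) • v k t)
      =O[𝓝[>] 0] fun t => t ^ r := by
  refine IsBigO.fun_sum fun k _ => ?_
  have hcoeff : (fun t => (μ * Real.log t) ^ k / k.factorial) =O[𝓝[>] 0] fun t => t ^ r := by
    simp only [mul_pow, mul_div_right_comm]
    exact (isBigO_log_pow_rpow_nhdsGT_zero k hr).const_mul_left _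
  simpa only [smul_eq_mul, mul_one] using hcoeff.smul (hv k)

lemma isBigO_gaugedCoeff_log_rpow_nhdsGT_zero (hA : ContDiffAt ℝ 1 A 0)
    (hnil : ∀ᶠ t in 𝓝[>] 0, A t ^ N = 0) (μ : ℝ) {r : ℝ} (hr : r < 0) :
    (fun t => gaugedCoeff N A (μ * Real.log t) t) =O[𝓝[>] 0] fun t => t ^ r := by
  have isBigO_one {g : ℝ → 𝔸} (hg : ContinuousAt g 0) : g =O[𝓝[>] 0] fun _ => (1 : ℝ) :=
    (hg.tendsto.isBigO_one ℝ).mono nhdsWithin_le_nhds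
  have hexp : (fun t => NormedSpace.exp (-((μ * Real.log t) • A t))) =O[𝓝[>] 0]
      fun t => t ^ (r / 2) := by
    refine (isBigO_sum_log_pow_smul_rpow_nhdsGT_zero (N := N) (v := fun k t => A t ^ k)
      (fun k => isBigO_one (hA.continuousAt.pow k)) (-μ) (by linarith)).congr' ?_ .rfl
    filter_upwards [hnil] with t ht
    rw [← neg_smul, ← neg_mul, exp_smul_eq_sum_of_pow_eq_zero ht]
  have hderiv : (fun t => ∑ k ∈ Finset.range N,
      ((μ * Real.log t) ^ k / k.factorial) • deriv (fun s => A s ^ k) t) =O[𝓝[>] 0]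
      fun t => t ^ (r / 2) :=
    isBigO_sum_log_pow_smul_rpow_nhdsGT_zero
      (fun k => isBigO_one ((hA.pow k).derivWithin (m := 0) (by simp)).continuousAt) μ
      (by linarith)
  refine (hexp.mul hderiv).trans_eventuallyEq ?_
  filter_upwards [self_mem_nhdsWithin] with t ht
  rw [← Real.rpow_add ht, add_halves]

theorem exists_isUnit_tendsto_mul_exp_log_smul [CompleteSpace 𝔸] {b p μ : ℝ}
    (hA0 : ContDiffAt ℝ 1 A 0) (hA : ContinuousOn A (Ioo 0 b))
    (hnil : ∀ t ∈ Ioo 0 b, A t ^ N = 0) (hp : p ∈ Ioo 0 b) (hTp : IsUnit (T p))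
    (hT : ∀ t ∈ Ioo 0 b, HasDerivAt T (-(μ / t) • (T t * A t)) t) :
    ∃ L, IsUnit L ∧
      Tendsto (fun t => T t * NormedSpace.exp ((μ * Real.log t) • A t)) (𝓝[>] 0) (𝓝 L) := by
  let _ := NormedAlgebra.restrictScalars ℚ ℝ 𝔸
  have hnear : ∀ᶠ t in 𝓝[>] (0 : ℝ), t ∈ Ioo 0 b := Ioo_mem_nhdsGT (hp.1.trans hp.2)
  have hTunit : ∀ t ∈ Ioo 0 b, IsUnit (T t) := fun t ht =>
    isUnit_of_hasDerivAt_mul_of_isUnit (K := fun t => -(μ / t) • A t) isOpen_Ioo isPreconnected_Ioo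
      (fun s hs => by simpa only [mul_smul_comm] using hT s hs)
      ((continuousOn_const.div continuousOn_id fun s hs => hs.1.ne').neg.smul hA) hp hTp ht
  have hAdiff : ∀ᶠ t in 𝓝[>] (0 : ℝ), DifferentiableAt ℝ A t :=
    nhdsWithin_le_nhds ((hA0.eventually (by simp)).mono fun t ht => ht.differentiableAt one_ne_zero)
  refine exists_isUnit_tendsto_nhdsGT_zero_of_hasDerivAt_mul (r := 1 / 2) one_half_lt_one ?_ ?_
    (isBigO_gaugedCoeff_log_rpow_nhdsGT_zero (N := N) hA0 (hnear.mono hnil) μ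
      (neg_lt_zero.2 one_half_pos))
  · filter_upwards [hnear, hAdiff] with t ht hAt
    refine hasDerivAt_mul_exp_smul_of_pow_eq_zero (l := fun t => μ * Real.log t)
      ?_ hAt (eventually_of_mem (isOpen_Ioo.mem_nhds ht) hnil) (hT t ht)
    simpa only [div_eq_mul_inv] using (Real.hasDerivAt_log ht.1.ne').const_mul μ
  · filter_upwards [hnear] with t ht
    exact (hTunit t ht).mul (NormedSpace.isUnit_exp _)

end NilpotentExp

section BilinearWedge

variable {V : Type*} [NormedAddCommGroup V] [NormedSpace ℝ V] (B : V →L[ℝ] V →L[ℝ] ℝ)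

/-- The endomorphism `v ∧ w : x ↦ B v x • w - B w x • v` associated with a continuous bilinear
form `B`; it is `B`-skew when `B` is symmetric. -/
def bilinWedge (v w : V) : V →L[ℝ] V :=
  (B v).smulRight w - (B w).smulRight v

lemma bilinWedge_apply (v w x : V) : bilinWedge B v w x = B v x • w - B w x • v :=
  rfl

variable {B} {v w : V}

lemma bilinWedge_apply_left (hvv : B v v = 0) (hwv : B w v = 0) : bilinWedge B v w v = 0 := by
  rw [bilinWedge_apply, hvv, hwv, zero_smul, zero_smul, sub_zero]

lemma bilinWedge_pow_three (hvv : B v v = 0) (hvw : B v w = 0) (hwv : B w v = 0) :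
    bilinWedge B v w ^ 3 = 0 := by
  ext x
  have hsq : bilinWedge B v w (bilinWedge B v w x) = -(B v x * B w w) • v := by
    rw [bilinWedge_apply B v w x, map_sub, map_smul, map_smul, bilinWedge_apply_left hvv hwv,
      bilinWedge_apply, hvw, zero_smul, zero_sub, smul_zero, sub_zero, smul_neg, smul_smul,
      neg_smul]
  rw [pow_succ', sq, mul_apply_eq_comp, mul_apply_eq_comp, hsq, map_smul,
    bilinWedge_apply_left hvv hwv, smul_zero, zero_apply]

lemma contDiffOn_bilinWedge {c d : ℝ → V} {m : WithTop ℕ∞} {S : Set ℝ} (hc : ContDiffOn ℝ m c S)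
    (hd : ContDiffOn ℝ m d S) : ContDiffOn ℝ m (fun t => bilinWedge B (c t) (d t)) S :=
  ((B.contDiff.comp_contDiffOn hc).smulRight hd).sub ((B.contDiff.comp_contDiffOn hd).smulRight hc)

lemma exp_apply_of_apply_eq_zero [CompleteSpace V] {a : V →L[ℝ] V} (hv : a v = 0) :
    NormedSpace.exp a v = v := by
  have hsum : HasSum (fun k : ℕ => ((k.factorial : ℝ)⁻¹ • a ^ k) v) (NormedSpace.exp a v) :=
    (NormedSpace.exp_series_hasSum_exp' (𝕂 := ℝ) a).mapL (ContinuousLinearMap.apply ℝ V v)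
  refine hsum.unique ?_
  convert hasSum_single (f := fun k : ℕ => ((k.factorial : ℝ)⁻¹ • a ^ k) v) 0 fun k hk => ?_
  · simp
  · obtain ⟨k, rfl⟩ := Nat.exists_eq_succ_of_ne_zero hk
    rw [smul_apply, pow_succ, mul_apply_eq_comp, hv, map_zero, smul_zero]

lemma bilin_apply_deriv_eq_zero {c : ℝ → V} {t : ℝ} (hB : ∀ v w, B v w = B w v)
    (hc : DifferentiableAt ℝ c t) (hnull : ∀ᶠ s in 𝓝 t, B (c s) (c s) = 0) :
    B (c t) (deriv c t) = 0 := by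
  have hderiv := (B.hasFDerivAt.comp_hasDerivAt t hc.hasDerivAt).clm_apply hc.hasDerivAt
  have hzero := hderiv.unique ((hasDerivAt_const t (0 : ℝ)).congr_of_eventuallyEq hnull)
  simp only [Function.comp_apply] at hzero
  rw [hB (deriv c t)] at hzero
  linarith

end BilinearWedge

theorem stmt11_general {V : Type*} [NormedAddCommGroup V] [NormedSpace ℝ V] [CompleteSpace V]
    {B : V →L[ℝ] V →L[ℝ] ℝ} (hB : ∀ v w, B v w = B w v) {ε b : ℝ} (hε : 0 < ε) {c : ℝ → V}
    (hc : ContDiffOn ℝ 2 c (Ioo (-ε) b)) (hnull : ∀ t ∈ Ioo (-ε) b, B (c t) (c t) = 0)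
    (hc0 : c 0 ≠ 0) {μ p : ℝ} (hp : p ∈ Ioo 0 b) {T : ℝ → V →L[ℝ] V} (hTp : IsUnit (T p))
    (hT : ∀ t ∈ Ioo 0 b, HasDerivAt T (-(μ / t) • (T t * bilinWedge B (c t) (deriv c t))) t) :
    ∃ x, x ≠ 0 ∧ Tendsto (fun t => T t (c t)) (𝓝[>] 0) (𝓝 x) := by
  set A := fun t => bilinWedge B (c t) (deriv c t)
  have h0 : (0 : ℝ) ∈ Ioo (-ε) b := ⟨neg_lt_zero.2 hε, hp.1.trans hp.2⟩
  have hpos : Ioo 0 b ⊆ Ioo (-ε) b := Ioo_subset_Ioo_left h0.1.le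
  have hA : ContDiffOn ℝ 1 A (Ioo (-ε) b) :=
    contDiffOn_bilinWedge (hc.of_le one_le_two) (hc.deriv_of_isOpen isOpen_Ioo le_rfl)
  have horth : ∀ t ∈ Ioo (-ε) b, B (c t) (deriv c t) = 0 := fun t ht =>
    bilin_apply_deriv_eq_zero hB
      ((hc.contDiffAt (isOpen_Ioo.mem_nhds ht)).differentiableAt two_ne_zero)
      (eventually_of_mem (isOpen_Ioo.mem_nhds ht) hnull)
  obtain ⟨L, hLunit, hL⟩ := exists_isUnit_tendsto_mul_exp_log_smul (N := 3)
    (hA.contDiffAt (isOpen_Ioo.mem_nhds h0)) (hA.continuousOn.mono hpos)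
    (fun t ht => bilinWedge_pow_three (hnull t (hpos ht)) (horth t (hpos ht))
      ((hB _ _).trans (horth t (hpos ht)))) hp hTp hT
  have hinj : Function.Injective L := (ContinuousLinearMap.isUnit_iff_bijective.1 hLunit).1
  refine ⟨L (c 0), (map_ne_zero_iff L hinj).2 hc0, ?_⟩
  have hc0lim : Tendsto c (𝓝[>] 0) (𝓝 (c 0)) :=
    (hc.continuousOn.continuousAt (isOpen_Ioo.mem_nhds h0)).mono_left nhdsWithin_le_nhds
  refine ((isBoundedBilinearMap_apply.continuous.tendsto (L, c 0)).comp
    (hL.prodMk_nhds hc0lim)).congr' ?_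
  filter_upwards [Ioo_mem_nhdsGT h0.2] with t ht
  rw [Function.comp_apply, mul_apply_eq_comp, exp_apply_of_apply_eq_zero]
  rw [smul_apply, bilinWedge_apply_left (hnull t (hpos ht))
    ((hB _ _).trans (horth t (hpos ht))), smul_zero]

/-- The Minkowski inner product `mink` as a continuous bilinear form, to which results about an
arbitrary symmetric `B` apply. -/
def minkForm (n : ℕ) : E n →L[ℝ] E n →L[ℝ] ℝ :=
  LinearMap.toContinuousBilinearMap
    (LinearMap.mk₂ ℝ mink mink_add_left mink_smul_left mink_add_right
      fun a v x => mink_smul_right v a x)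

lemma wedge_eq_bilinWedge (v w : E n) : wedge v w = bilinWedge (minkForm n) v w :=
  rfl

/-- Theorem 4.1: every Calapso transform of a polarized curve with a
first-order pole converges at the singularity. -/
theorem stmt11 {n : ℕ} (ε b : ℝ) (hε : 0 < ε) (hb : 0 < b)
    (c : ℝ → E n) (hc : ContDiffOn ℝ (⊤ : ℕ∞) c (Set.Ioo (-ε) b))
    (hcnull : ∀ t ∈ Set.Ioo (-ε) b, mink (c t) (c t) = 0)
    (hcne : ∀ t ∈ Set.Ioo (-ε) b, c t ≠ 0)
    (hcreg : ∀ t ∈ Set.Ioo (-ε) b, 0 < mink (deriv c t) (deriv c t))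
    (lam : ℝ) (p : ℝ) (hp : p ∈ Set.Ioo (0:ℝ) b)
    (T : ℝ → E n →L[ℝ] E n) (hTp : T p = 1)
    (hT : ∀ t ∈ Set.Ioo (0:ℝ) b,
      HasDerivAt T ((-(lam / t)) • (T t * wedge (c t) (deriv c t))) t) :
    ∃ x : E n, x ≠ 0 ∧ ∃ r : ℝ → ℝ, (∀ t ∈ Set.Ioo (0:ℝ) b, r t ≠ 0) ∧
      Tendsto (fun t : ℝ => r t • (T t) (c t)) (𝓝[>] 0) (𝓝 x) := by
  obtain ⟨x, hx, hlim⟩ := stmt11_general (B := minkForm n) mink_comm hε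
    (hc.of_le (by norm_cast)) hcnull (hcne 0 ⟨neg_lt_zero.2 hε, hb⟩) hp
    (hTp ▸ isUnit_one)
    (fun t ht => by simpa only [wedge_eq_bilinWedge] using hT t ht)
  exact ⟨x, hx, fun _ => 1, fun _ _ => one_ne_zero, by simpa only [one_smul] using hlim⟩
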